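/- Small arithmetic derivatives satisfying independence: let a, b be coprime positive integers with (a,b) ≠ (1,1), let c = a + b, and let r = ω(abc) − 1 (so r ≥ 1). For any ℤ-linearly independent derivations ψ₁, …, ψ_r ∈ 𝒯(a,b) there is at least one index 1 ≤ i₀ ≤ r such that a, b are ψ_{i₀}-independent. Furthermore, such a family ψ₁, …, ψ_r can be chosen so that in addition ‖ψ_{i₀}‖ ≤ (ω(abc)/(2 log 2)) · c · log c. -/

import Mathlib

/-!
Let `c = a + b`. Both `d^ψ(c) - d^ψ(a) - d^ψ(b)` and `W^ψ(a, b)` are linear forms in `ψ`. At a prime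
factor `p` of `c / gcd(a, b)` one has `v_p(a) = v_p(b) < v_p(c)`, so the first form has a nonzero
coefficient and the second a zero one; at a prime `q` with `v_q(a) ≠ v_q(b)`, which exists as soon
as `a ≠ b`, the second form has a nonzero coefficient. Hence an element of `𝒯(a, b)` with zero
Wronskian is determined by its values away from `p` and `q`, and `ω(abc) - 1` independent elements
cannot all be of this kind. The small family consists of the relations `L_q e_p - L_p e_q`, where
`L_q` are the coefficients of the first form; these satisfy `|L_q| ≤ c log₂ c / 2`, because
`q L_q = a (v_q(c) - v_q(a)) + b (v_q(c) - v_q(b))`.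
-/

open Finset

/-- The arithmetic derivative attached to `ψ`: `d^ψ(n) = Σ_{p ∣ n} (n·v_p(n)/p)·ψ(p)`,
with `d^ψ(0) = 0` (empty sum). Each term is written as `(n/p)·v_p(n)·ψ(p)`, exact since `p ∣ n`. -/
def dpsi (ψ : ℕ → ℤ) (n : ℤ) : ℤ :=
  ∑ p ∈ n.natAbs.primeFactors, (n / (p : ℤ)) * (n.natAbs.factorization p : ℤ) * ψ p

/-- A derivation: a function on primes (zero off primes) with finite norm. -/
def IsDeriv (ψ : ℕ → ℤ) : Prop :=
  (∀ p : ℕ, ¬ p.Prime → ψ p = 0) ∧ ∃ B : ℤ, ∀ p : ℕ, |ψ p| ≤ B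

/-- The norm `‖ψ‖ = sup_p |ψ(p)|`. -/
noncomputable def dNorm (ψ : ℕ → ℤ) : ℝ := ⨆ p : ℕ, (|ψ p| : ℝ)

/-- Membership in `𝒯(a,b)`: a derivation supported on the primes dividing `ab(a+b)`
satisfying `d^ψ(a+b) = d^ψ(a) + d^ψ(b)`. -/
def MemT (a b : ℕ) (ψ : ℕ → ℤ) : Prop :=
  IsDeriv ψ ∧ (∀ p : ℕ, p.Prime → ¬ p ∣ (a * b * (a + b)) → ψ p = 0) ∧
    dpsi ψ ((a : ℤ) + (b : ℤ)) = dpsi ψ (a : ℤ) + dpsi ψ (b : ℤ)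

/-- The `ψ`-Wronskian `W^ψ(a,b) = a·d^ψ(b) − b·d^ψ(a)`. -/
def Wpsi (ψ : ℕ → ℤ) (a b : ℤ) : ℤ := a * dpsi ψ b - b * dpsi ψ a

/-- Membership in `𝒯°(a,b)`: elements of `𝒯(a,b)` for which `a, b` are `ψ`-dependent. -/
def MemT0 (a b : ℕ) (ψ : ℕ → ℤ) : Prop := MemT a b ψ ∧ Wpsi ψ (a : ℤ) (b : ℤ) = 0

/-- The radical of `n`: product of the distinct primes dividing `n`. -/
def radN (n : ℕ) : ℕ := ∏ p ∈ n.primeFactors, p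

/-- The Small Derivatives Conjecture with exponent `η`: for all but finitely many triples of
coprime positive integers `(a,b,c)` with `a+b=c`, not of the form `(1,N,q)` with `q` prime
up to order, there is `ψ ∈ 𝒯(a,b)` with `a,b` `ψ`-independent and `‖ψ‖ < c^η`. -/
def SDC (η : ℝ) : Prop :=
  {t : ℕ × ℕ × ℕ | 0 < t.1 ∧ 0 < t.2.1 ∧ t.1 + t.2.1 = t.2.2 ∧ Nat.Coprime t.1 t.2.1 ∧
    ¬ (∃ N q : ℕ, q.Prime ∧ ({t.1, t.2.1, t.2.2} : Multiset ℕ) = {1, N, q}) ∧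
    ¬ ∃ ψ : ℕ → ℤ, MemT t.1 t.2.1 ψ ∧ Wpsi ψ (t.1 : ℤ) (t.2.1 : ℤ) ≠ 0 ∧
      dNorm ψ < (t.2.2 : ℝ) ^ η}.Finite

section Koszul

variable {R σ : Type*} [CommRing R] [DecidableEq σ]

/-- The Koszul relation `ℓ_q e_p - ℓ_p e_q` between the coefficients `ℓ_x = ℓ e_x` of a linear
form `ℓ`: the simplest vectors on which `ℓ` vanishes. -/
def koszulVec (ℓ : (σ → R) →ₗ[R] R) (p q : σ) : σ → R :=
  Pi.single p (ℓ (Pi.single q 1)) - Pi.single q (ℓ (Pi.single p 1))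

lemma map_single_eq_mul (ℓ : (σ → R) →ₗ[R] R) (p : σ) (r : R) :
    ℓ (Pi.single p r) = r * ℓ (Pi.single p 1) := by
  rw [← smul_eq_mul, ← map_smul, ← Pi.single_smul, smul_eq_mul, mul_one]

lemma map_koszulVec (ℓ w : (σ → R) →ₗ[R] R) (p q : σ) :
    w (koszulVec ℓ p q) =
      ℓ (Pi.single q 1) * w (Pi.single p 1) - ℓ (Pi.single p 1) * w (Pi.single q 1) := by
  rw [koszulVec, map_sub, map_single_eq_mul w p, map_single_eq_mul w q]

lemma map_koszulVec_self (ℓ : (σ → R) →ₗ[R] R) (p q : σ) : ℓ (koszulVec ℓ p q) = 0 := by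
  rw [map_koszulVec, mul_comm, sub_self]

lemma koszulVec_apply_of_ne (ℓ : (σ → R) →ₗ[R] R) {p q x : σ} (hp : x ≠ p) (hq : x ≠ q) :
    koszulVec ℓ p q x = 0 := by
  simp [koszulVec, hp, hq]

lemma linearIndependent_koszulVec [IsDomain R] {ℓ : (σ → R) →ₗ[R] R} {p : σ}
    (hp : ℓ (Pi.single p 1) ≠ 0) :
    LinearIndependent R fun q : {q // q ≠ p} ↦ koszulVec ℓ p q := by
  let forget := LinearMap.funLeft R R (Subtype.val : {q // q ≠ p} → σ)
  have hforget : (forget ∘ fun q : {q // q ≠ p} ↦ koszulVec ℓ p q) =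
      fun q ↦ Pi.single q (-ℓ (Pi.single p 1)) := by
    ext q x
    rcases eq_or_ne x q with rfl | hxq
    · simp [forget, koszulVec, LinearMap.funLeft_apply, x.2]
    · simp [forget, koszulVec, LinearMap.funLeft_apply, x.2, hxq, Subtype.coe_ne_coe.mpr hxq]
  refine .of_comp forget ?_
  rw [hforget]
  exact Pi.linearIndependent_single_of_ne_zero fun _ ↦ neg_ne_zero.mpr hp

lemma abs_koszulVec_le [LinearOrder R] [IsOrderedAddMonoid R] (ℓ : (σ → R) →ₗ[R] R) (p q x : σ) :
    |koszulVec ℓ p q x| ≤ max |ℓ (Pi.single p 1)| |ℓ (Pi.single q 1)| := by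
  by_cases hp : x = p <;> by_cases hq : x = q <;> simp_all [koszulVec]

end Koszul

section LinearIndependence

variable {R σ : Type*} [CommRing R]

lemma card_le_of_linearIndependent_of_determined [Nontrivial R] {ι : Type*} [Fintype ι]
    {v : ι → σ → R} (hv : LinearIndependent R v) {N : Submodule R (σ → R)} (hN : ∀ i, v i ∈ N)
    {U : Finset σ} (hU : ∀ x ∈ N, (∀ u ∈ U, x u = 0) → x = 0) : Fintype.card ι ≤ #U := by
  let restrict := LinearMap.funLeft R R (Subtype.val : U → σ)
  have hspan : Submodule.span R (Set.range v) ≤ N :=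
    Submodule.span_le.mpr (Set.range_subset_iff.mpr hN)
  have hdisj : Disjoint (Submodule.span R (Set.range v)) restrict.ker :=
    Submodule.disjoint_def.mpr fun x hx hker ↦
      hU x (hspan hx) fun u hu ↦ congrFun (LinearMap.mem_ker.mp hker) ⟨u, hu⟩
  simpa using (hv.map hdisj).fintype_card_le_finrank

variable [IsDomain R] [DecidableEq σ] {ℓ w : (σ → R) →ₗ[R] R} {p q : σ}

lemma eq_zero_of_map_eq_zero_of_triangular (hℓp : ℓ (Pi.single p 1) ≠ 0)
    (hwp : w (Pi.single p 1) = 0) (hwq : w (Pi.single q 1) ≠ 0) {x : σ → R} (hℓ : ℓ x = 0)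
    (hw : w x = 0) (hx : ∀ y, y ≠ p → y ≠ q → x y = 0) : x = 0 := by
  have hpq : p ≠ q := by rintro rfl; exact hwq hwp
  have hdecomp : x = Pi.single p (x p) + Pi.single q (x q) := by
    ext y
    by_cases hyp : y = p <;> by_cases hyq : y = q <;> simp_all
  have hxq : x q = 0 := by
    rw [hdecomp, map_add, map_single_eq_mul w p, map_single_eq_mul w q, hwp, mul_zero,
      zero_add] at hw
    exact (mul_eq_zero.mp hw).resolve_right hwq
  have hxp : x p = 0 := by
    rw [hdecomp, hxq, Pi.single_zero, add_zero, map_single_eq_mul] at hℓ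
    exact (mul_eq_zero.mp hℓ).resolve_right hℓp
  rw [hdecomp, hxp, hxq, Pi.single_zero, Pi.single_zero, add_zero]

lemma card_add_two_le_of_linearIndependent_of_triangular {ι : Type*} [Fintype ι] {v : ι → σ → R}
    (hv : LinearIndependent R v) {S : Finset σ} (hsupp : ∀ i, ∀ x ∉ S, v i x = 0)
    (hℓ : ∀ i, ℓ (v i) = 0) (hw : ∀ i, w (v i) = 0) (hpS : p ∈ S) (hqS : q ∈ S)
    (hℓp : ℓ (Pi.single p 1) ≠ 0) (hwp : w (Pi.single p 1) = 0) (hwq : w (Pi.single q 1) ≠ 0) :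
    Fintype.card ι + 2 ≤ #S := by
  have hpq : p ≠ q := by rintro rfl; exact hwq hwp
  let N : Submodule R (σ → R) := Submodule.pi (↑S)ᶜ (fun _ ↦ ⊥) ⊓ ℓ.ker ⊓ w.ker
  have hN (i : ι) : v i ∈ N := ⟨⟨hsupp i, hℓ i⟩, hw i⟩
  have hcard : Fintype.card ι ≤ #(S \ {p, q}) := by
    refine card_le_of_linearIndependent_of_determined hv hN fun x ⟨⟨hxS, hℓx⟩, hwx⟩ hx ↦ ?_
    refine eq_zero_of_map_eq_zero_of_triangular hℓp hwp hwq hℓx hwx fun y hyp hyq ↦ ?_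
    by_cases hy : y ∈ S
    · exact hx y (by simp [hy, hyp, hyq])
    · exact hxS y hy
  have hsub : {p, q} ⊆ S := by simp [insert_subset_iff, hpS, hqS]
  have := card_sdiff_add_card_eq_card hsub
  rw [card_pair hpq] at this
  lia

end LinearIndependence

lemma mul_dpsi_single (n p : ℕ) :
    (p : ℤ) * dpsi (Pi.single p 1) n = n * n.factorization p := by
  rw [dpsi, Int.natAbs_natCast]
  by_cases hp : p ∈ n.primeFactors
  · rw [sum_eq_single_of_mem p hp fun x _ hx ↦ by simp [hx], Pi.single_eq_same, mul_one,
      ← mul_assoc, Int.mul_ediv_cancel' (by exact_mod_cast Nat.dvd_of_mem_primeFactors hp)]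
  · have hzero : n.factorization p = 0 := by
      rwa [← Finsupp.notMem_support_iff, Nat.support_factorization]
    rw [sum_eq_zero fun x hx ↦ by simp [ne_of_mem_of_not_mem hx hp], hzero]
    simp

/-- The arithmetic derivative of a fixed integer `n`, as a linear form in the derivation. -/
def dpsiLinear (n : ℤ) : (ℕ → ℤ) →ₗ[ℤ] ℤ where
  toFun ψ := dpsi ψ n
  map_add' ψ φ := by simp [dpsi, mul_add, sum_add_distrib]
  map_smul' r ψ := by simp [dpsi, mul_sum, mul_left_comm]

/-- The failure `d^ψ(a + b) - d^ψ(a) - d^ψ(b)` of additivity, as a linear form in `ψ`; its kernel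
cuts out `𝒯(a, b)`. -/
def additivityDefect (a b : ℕ) : (ℕ → ℤ) →ₗ[ℤ] ℤ :=
  dpsiLinear ((a : ℤ) + b) - dpsiLinear a - dpsiLinear b

/-- The Wronskian `W^ψ(a, b)`, as a linear form in `ψ`. -/
def wronskianLinear (a b : ℕ) : (ℕ → ℤ) →ₗ[ℤ] ℤ :=
  (a : ℤ) • dpsiLinear b - (b : ℤ) • dpsiLinear a

lemma additivityDefect_apply (a b : ℕ) (ψ : ℕ → ℤ) :
    additivityDefect a b ψ = dpsi ψ ((a : ℤ) + b) - dpsi ψ a - dpsi ψ b := rfl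

lemma wronskianLinear_apply (a b : ℕ) (ψ : ℕ → ℤ) : wronskianLinear a b ψ = Wpsi ψ a b := rfl

lemma mul_additivityDefect_single (a b p : ℕ) :
    (p : ℤ) * additivityDefect a b (Pi.single p 1) =
      a * ((a + b).factorization p - a.factorization p) +
        b * ((a + b).factorization p - b.factorization p) := by
  have hsum := mul_dpsi_single (a + b) p
  push_cast at hsum
  rw [additivityDefect_apply]
  linear_combination hsum - mul_dpsi_single a p - mul_dpsi_single b p

lemma mul_wronskianLinear_single (a b p : ℕ) :
    (p : ℤ) * wronskianLinear a b (Pi.single p 1) =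
      a * b * (b.factorization p - a.factorization p) := by
  rw [wronskianLinear_apply, Wpsi]
  linear_combination (a : ℤ) * mul_dpsi_single b p - (b : ℤ) * mul_dpsi_single a p

lemma memT_iff {a b : ℕ} (ha : 0 < a) (hb : 0 < b) {ψ : ℕ → ℤ} :
    MemT a b ψ ↔
      (∀ p ∉ (a * b * (a + b)).primeFactors, ψ p = 0) ∧ additivityDefect a b ψ = 0 := by
  have hne : a * b * (a + b) ≠ 0 := by positivity
  have hadd : additivityDefect a b ψ = 0 ↔ dpsi ψ ((a : ℤ) + b) = dpsi ψ a + dpsi ψ b := by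
    rw [additivityDefect_apply, sub_sub, sub_eq_zero]
  rw [MemT, hadd, ← and_assoc]
  refine and_congr_left fun _ ↦ ⟨fun ⟨⟨hprime, _⟩, hdvd⟩ p hp ↦ ?_, fun hsupp ↦ ?_⟩
  · by_cases hpp : p.Prime
    · exact hdvd p hpp fun hpd ↦ hp (Nat.mem_primeFactors.mpr ⟨hpp, hpd, hne⟩)
    · exact hprime p hpp
  · refine ⟨⟨fun p hp ↦ hsupp p fun h ↦ hp (Nat.prime_of_mem_primeFactors h),
      ∑ p ∈ (a * b * (a + b)).primeFactors, |ψ p|, fun p ↦ ?_⟩,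
      fun p _ hp ↦ hsupp p fun h ↦ hp (Nat.dvd_of_mem_primeFactors h)⟩
    by_cases hp : p ∈ (a * b * (a + b)).primeFactors
    · exact single_le_sum (f := fun p ↦ |ψ p|) (fun x _ ↦ abs_nonneg _) hp
    · rw [hsupp p hp, abs_zero]
      exact sum_nonneg fun x _ ↦ abs_nonneg _

lemma exists_factorization_eq_lt_factorization_add {a b : ℕ} (ha : 0 < a) (hb : 0 < b) :
    ∃ p, a.factorization p = b.factorization p ∧
      a.factorization p < (a + b).factorization p := by
  obtain ⟨a', b', hcop, ha', hb'⟩ := Nat.exists_coprime a b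
  set g := a.gcd b
  have hg : g ≠ 0 := (Nat.gcd_pos_of_pos_left b ha).ne'
  have ha'0 : a' ≠ 0 := by rintro rfl; lia
  have hb'0 : b' ≠ 0 := by rintro rfl; lia
  obtain ⟨p, hp, hpdvd⟩ := Nat.exists_prime_and_dvd (show a' + b' ≠ 1 by lia)
  have hpa : ¬ p ∣ a' := fun h ↦ Nat.not_coprime_of_dvd_of_dvd hp.one_lt h
    ((Nat.dvd_add_right h).mp hpdvd) hcop
  have hpb : ¬ p ∣ b' := fun h ↦ hpa ((Nat.dvd_add_left h).mp hpdvd)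
  have hpos := hp.factorization_pos_of_dvd (by lia) hpdvd
  refine ⟨p, ?_⟩
  rw [ha', hb', ← add_mul, Nat.factorization_mul ha'0 hg, Nat.factorization_mul hb'0 hg,
    Nat.factorization_mul (by lia) hg]
  simp [Nat.factorization_eq_zero_of_not_dvd, hpa, hpb, hpos]

lemma exists_triangular_primes {a b : ℕ} (ha : 0 < a) (hb : 0 < b) (hab : a ≠ b) :
    ∃ p ∈ (a * b * (a + b)).primeFactors, ∃ q ∈ (a * b * (a + b)).primeFactors,
      additivityDefect a b (Pi.single p 1) ≠ 0 ∧ wronskianLinear a b (Pi.single p 1) = 0 ∧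
        wronskianLinear a b (Pi.single q 1) ≠ 0 := by
  obtain ⟨p, hp, hlt⟩ := exists_factorization_eq_lt_factorization_add ha hb
  obtain ⟨q, hq⟩ : ∃ q, a.factorization q ≠ b.factorization q := by
    contrapose! hab
    exact Nat.eq_of_factorization_eq ha.ne' hb.ne' hab
  have hfact (x : ℕ) : (a * b * (a + b)).factorization x =
      a.factorization x + b.factorization x + (a + b).factorization x := by
    rw [Nat.factorization_mul (by positivity) (by positivity), Nat.factorization_mul ha.ne' hb.ne']
    rfl
  have hmem (x : ℕ) (hx : (a * b * (a + b)).factorization x ≠ 0) :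
      x ∈ (a * b * (a + b)).primeFactors := by
    rwa [← Nat.support_factorization, Finsupp.mem_support_iff]
  have hpS := hmem p (by rw [hfact]; lia)
  have hp0 : (p : ℤ) ≠ 0 := by exact_mod_cast (Nat.prime_of_mem_primeFactors hpS).ne_zero
  refine ⟨p, hpS, q, hmem q (by rw [hfact]; lia), fun h ↦ ?_, ?_, fun h ↦ ?_⟩
  · have := mul_additivityDefect_single a b p
    rw [h, mul_zero, ← hp, ← add_mul] at this
    exact (mul_pos (by positivity : (0 : ℤ) < a + b) (by lia)).ne this
  · have := mul_wronskianLinear_single a b p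
    rw [hp, sub_self, mul_zero] at this
    exact (mul_eq_zero.mp this).resolve_left hp0
  · have := mul_wronskianLinear_single a b q
    rw [h, mul_zero] at this
    have hsub : ((b.factorization q : ℤ) - a.factorization q) ≠ 0 := by lia
    exact mul_ne_zero (by positivity) hsub this.symm

lemma factorization_le_log_two (n p : ℕ) : n.factorization p ≤ Nat.log 2 n := by
  rcases eq_or_ne n 0 with rfl | hn
  · simp
  by_cases hp : p.Prime
  · exact Nat.le_log_of_pow_le one_lt_two
      ((Nat.pow_le_pow_left hp.two_le _).trans (Nat.ordProj_le p hn))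
  · simp [hp]

lemma dpsi_single_of_not_prime (n : ℤ) {p : ℕ} (hp : ¬ p.Prime) (r : ℤ) :
    dpsi (Pi.single p r) n = 0 :=
  sum_eq_zero fun x hx ↦ by
    simp [show x ≠ p from fun h ↦ hp (h ▸ Nat.prime_of_mem_primeFactors hx)]

lemma additivityDefect_single_of_not_prime (a b : ℕ) {p : ℕ} (hp : ¬ p.Prime) :
    additivityDefect a b (Pi.single p 1) = 0 := by
  simp only [additivityDefect_apply, dpsi_single_of_not_prime _ hp, sub_zero]

lemma two_mul_abs_additivityDefect_single_le (a b p : ℕ) :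
    2 * |additivityDefect a b (Pi.single p 1)| ≤ (a + b) * Nat.log 2 (a + b) := by
  by_cases hp : p.Prime
  swap
  · rw [additivityDefect_single_of_not_prime a b hp, abs_zero, mul_zero]
    positivity
  have hlog {n : ℕ} (hn : n ≤ a + b) :
      |((a + b).factorization p : ℤ) - n.factorization p| ≤ Nat.log 2 (a + b) := by
    have := factorization_le_log_two (a + b) p
    have := (factorization_le_log_two n p).trans (Nat.log_mono_right hn)
    rw [abs_le]
    lia
  calc 2 * |additivityDefect a b (Pi.single p 1)|
      ≤ p * |additivityDefect a b (Pi.single p 1)| := by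
        gcongr
        exact_mod_cast hp.two_le
    _ = |a * (((a + b).factorization p : ℤ) - a.factorization p) +
          b * ((a + b).factorization p - b.factorization p)| := by
        rw [← mul_additivityDefect_single, abs_mul, Nat.abs_cast]
    _ ≤ a * |((a + b).factorization p : ℤ) - a.factorization p| +
          b * |((a + b).factorization p : ℤ) - b.factorization p| := by
        refine (abs_add_le _ _).trans_eq ?_
        rw [abs_mul, abs_mul, Nat.abs_cast, Nat.abs_cast]
    _ ≤ a * Nat.log 2 (a + b) + b * Nat.log 2 (a + b) := by
        gcongr
        · exact hlog (Nat.le_add_right a b)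
        · exact hlog (Nat.le_add_left b a)
    _ = (a + b) * Nat.log 2 (a + b) := by ring

lemma dNorm_koszulVec_additivityDefect_le (a b p q : ℕ) :
    dNorm (koszulVec (additivityDefect a b) p q) ≤
      ((a + b : ℕ) : ℝ) * Real.logb 2 (a + b : ℕ) / 2 := by
  refine ciSup_le fun x ↦ ?_
  have hint : 2 * |koszulVec (additivityDefect a b) p q x| ≤ (a + b) * Nat.log 2 (a + b) := by
    have hp := two_mul_abs_additivityDefect_single_le a b p
    have hq := two_mul_abs_additivityDefect_single_le a b q
    have hmax := abs_koszulVec_le (additivityDefect a b) p q x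
    lia
  have hreal : 2 * |((koszulVec (additivityDefect a b) p q x : ℤ) : ℝ)| ≤
      ((a + b : ℕ) : ℝ) * Nat.log 2 (a + b) := by exact_mod_cast hint
  have hlog : ((a + b : ℕ) : ℝ) * Nat.log 2 (a + b) ≤ (a + b : ℕ) * Real.logb 2 (a + b : ℕ) := by
    gcongr
    exact_mod_cast Real.natLog_le_logb (a + b) 2
  linarith

lemma memT_koszulVec {a b : ℕ} (ha : 0 < a) (hb : 0 < b) {p q : ℕ}
    (hp : p ∈ (a * b * (a + b)).primeFactors) (hq : q ∈ (a * b * (a + b)).primeFactors) :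
    MemT a b (koszulVec (additivityDefect a b) p q) :=
  (memT_iff ha hb).mpr
    ⟨fun _ hx ↦ koszulVec_apply_of_ne _ (ne_of_mem_of_not_mem hp hx).symm
      (ne_of_mem_of_not_mem hq hx).symm, map_koszulVec_self _ p q⟩

lemma one_le_card_primeFactors_sub_one {a b : ℕ} (ha : 0 < a) (hb : 0 < b) (hab : a ≠ b) :
    1 ≤ #(a * b * (a + b)).primeFactors - 1 := by
  obtain ⟨p, hp, q, hq, -, hwp, hwq⟩ := exists_triangular_primes ha hb hab
  have : 1 < #(a * b * (a + b)).primeFactors :=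
    one_lt_card.mpr ⟨p, hp, q, hq, by rintro rfl; exact hwq hwp⟩
  lia

lemma exists_wpsi_ne_zero_of_linearIndependent {a b : ℕ} (ha : 0 < a) (hb : 0 < b) (hab : a ≠ b)
    {ι : Type*} [Fintype ι] (hι : #(a * b * (a + b)).primeFactors - 1 ≤ Fintype.card ι)
    {ψs : ι → ℕ → ℤ} (hT : ∀ i, MemT a b (ψs i)) (hli : LinearIndependent ℤ ψs) :
    ∃ i, Wpsi (ψs i) a b ≠ 0 := by
  by_contra! hW
  obtain ⟨p, hp, q, hq, hℓp, hwp, hwq⟩ := exists_triangular_primes ha hb hab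
  have hT' (i) := (memT_iff ha hb).mp (hT i)
  have := card_add_two_le_of_linearIndependent_of_triangular hli (fun i ↦ (hT' i).1)
    (fun i ↦ (hT' i).2) hW hp hq hℓp hwp hwq
  lia

lemma exists_linearIndependent_memT_dNorm_le {a b : ℕ} (ha : 0 < a) (hb : 0 < b) (hab : a ≠ b) :
    ∃ ψs : Fin (#(a * b * (a + b)).primeFactors - 1) → (ℕ → ℤ),
      (∀ i, MemT a b (ψs i)) ∧ LinearIndependent ℤ ψs ∧
        ∀ i, dNorm (ψs i) ≤ ((a + b : ℕ) : ℝ) * Real.logb 2 (a + b : ℕ) / 2 := by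
  obtain ⟨p, hp, -, -, hℓp, -, -⟩ := exists_triangular_primes ha hb hab
  let e := ((a * b * (a + b)).primeFactors.erase p).equivFinOfCardEq (card_erase_of_mem hp)
  let toNe (i) : {q // q ≠ p} := ⟨e.symm i, ne_of_mem_erase (e.symm i).2⟩
  have htoNe : Function.Injective toNe := fun i j h ↦
    e.symm.injective (Subtype.ext (Subtype.mk.inj h))
  exact ⟨fun i ↦ koszulVec (additivityDefect a b) p (toNe i),
    fun i ↦ memT_koszulVec ha hb hp (mem_of_mem_erase (e.symm i).2),
    (linearIndependent_koszulVec hℓp).comp toNe htoNe,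
    fun i ↦ dNorm_koszulVec_additivityDefect_le a b p (toNe i)⟩

theorem small_derivatives_independence_general (a b : ℕ) (ha : 0 < a) (hb : 0 < b) (hab : a ≠ b) :
    1 ≤ #(a * b * (a + b)).primeFactors - 1 ∧
    (∀ ψs : Fin (#(a * b * (a + b)).primeFactors - 1) → (ℕ → ℤ),
      (∀ i, MemT a b (ψs i)) → LinearIndependent ℤ ψs →
      ∃ i, Wpsi (ψs i) (a : ℤ) (b : ℤ) ≠ 0) ∧
    (∃ ψs : Fin (#(a * b * (a + b)).primeFactors - 1) → (ℕ → ℤ),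
      (∀ i, MemT a b (ψs i)) ∧ LinearIndependent ℤ ψs ∧
      (∃ i, Wpsi (ψs i) (a : ℤ) (b : ℤ) ≠ 0) ∧
      ∀ i, dNorm (ψs i) ≤ ((a + b : ℕ) : ℝ) * Real.logb 2 (a + b : ℕ) / 2) := by
  have hindep {ψs : Fin (#(a * b * (a + b)).primeFactors - 1) → (ℕ → ℤ)} :=
    exists_wpsi_ne_zero_of_linearIndependent ha hb hab (Fintype.card_fin _).ge (ψs := ψs)
  obtain ⟨ψs, hT, hli, hnorm⟩ := exists_linearIndependent_memT_dNorm_le ha hb hab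
  exact ⟨one_le_card_primeFactors_sub_one ha hb hab, fun _ ↦ hindep,
    ψs, hT, hli, hindep hT hli, hnorm⟩

lemma mul_logb_two_div_two_le {n k : ℕ} (hk : 1 ≤ k) :
    (n : ℝ) * Real.logb 2 n / 2 ≤ k / (2 * Real.log 2) * n * Real.log n := by
  have hk' : (1 : ℝ) ≤ k := by exact_mod_cast hk
  calc (n : ℝ) * Real.logb 2 n / 2 = 1 / (2 * Real.log 2) * n * Real.log n := by
        rw [Real.logb]; ring
    _ ≤ k / (2 * Real.log 2) * n * Real.log n := by gcongr

/-- Small arithmetic derivatives satisfying independence. -/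
theorem small_derivatives_independence (a b : ℕ) (ha : 0 < a) (hb : 0 < b)
    (hab : Nat.Coprime a b) (hne : ¬ (a = 1 ∧ b = 1)) :
    1 ≤ (a * b * (a + b)).primeFactors.card - 1 ∧
    (∀ ψs : Fin ((a * b * (a + b)).primeFactors.card - 1) → (ℕ → ℤ),
      (∀ i, MemT a b (ψs i)) → LinearIndependent ℤ ψs →
      ∃ i, Wpsi (ψs i) (a : ℤ) (b : ℤ) ≠ 0) ∧
    (∃ ψs : Fin ((a * b * (a + b)).primeFactors.card - 1) → (ℕ → ℤ),
      (∀ i, MemT a b (ψs i)) ∧ LinearIndependent ℤ ψs ∧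
      ∃ i, Wpsi (ψs i) (a : ℤ) (b : ℤ) ≠ 0 ∧
        dNorm (ψs i) ≤ ((a * b * (a + b)).primeFactors.card : ℝ) / (2 * Real.log 2) *
          ((a + b : ℕ) : ℝ) * Real.log ((a + b : ℕ) : ℝ)) := by
  have hab' : a ≠ b := by rintro rfl; simp_all
  obtain ⟨hr, hindep, ψs, hT, hli, ⟨i, hi⟩, hnorm⟩ :=
    small_derivatives_independence_general a b ha hb hab'
  exact ⟨hr, hindep, ψs, hT, hli, i, hi, (hnorm i).trans (mul_logb_two_div_two_le (by lia))⟩
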